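/- Fix $\rho \in (0,1)$, $q > 0$, $\gamma > \frac{1}{1-\rho}$, and $d = d(n) \ge n$. For each $n$, let $x_1,\dots,x_n \in \mathbb{R}^d$ with $\|x_i\|^2 = q$ and pairwise cosine similarity $\rho$, and let $X' = \mathcal{ATT}(\mathcal{N}(X))$ be the attention output (with $\beta = \gamma\log n$, no residual). Then $\frac{1}{nd}\|\nabla_X X'\|_F^2 = \frac{1}{q}\left(1 - \frac{1}{d}\right) + o_n(1)$, where $\|\cdot\|_F$ is the Frobenius norm of the $nd \times nd$ Jacobian. -/

import Mathlib

open scoped RealInnerProductSpace BigOperators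

/-!
For unit tokens `y` the score of a token with itself is `β`, and at most `β ρ` with any other, so an
off-diagonal softmax weight is at most `exp (-β (1 - ρ))`. Along a direction `e ⟂ y i`, the term of
the Jacobian of `𝒜𝒯𝒯` weighted by the large diagonal weight has vanishing score derivative, and all
the others carry an off-diagonal weight. The relative error against the identity is therefore at
most `n exp (-β (1 - ρ)) (1 + 2 β)`, which tends to `0` for `β = γ log n` because `γ (1 - ρ) > 1`.
The directions `e ⟂ y i` are the only ones that matter, since the `i`-th block of the Jacobian of
`𝒩` is `‖x i‖⁻¹` times the orthogonal projection onto `(x i)ᗮ`; its squared Frobenius norm is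
`(d - 1) / q`.
-/

open Filter Topology

section Softmax

variable {ι : Type*} [Fintype ι]

/-- The softmax probability vector of a family of scores. -/
noncomputable def softmax (s : ι → ℝ) (m : ι) : ℝ :=
  (∑ l, Real.exp (s l))⁻¹ * Real.exp (s m)

lemma sum_exp_pos [Nonempty ι] (s : ι → ℝ) : 0 < ∑ l, Real.exp (s l) :=
  Finset.sum_pos (fun l _ ↦ Real.exp_pos (s l)) Finset.univ_nonempty

lemma softmax_nonneg (s : ι → ℝ) (m : ι) : 0 ≤ softmax s m := by
  unfold softmax
  positivity

lemma sum_softmax [Nonempty ι] (s : ι → ℝ) : ∑ m, softmax s m = 1 := by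
  simp only [softmax, ← Finset.mul_sum]
  exact inv_mul_cancel₀ (sum_exp_pos s).ne'

lemma softmax_le_exp_sub (s : ι → ℝ) (k m : ι) : softmax s m ≤ Real.exp (s m - s k) := by
  rw [softmax, Real.exp_sub, div_eq_inv_mul]
  gcongr
  exact Finset.single_le_sum (f := fun l ↦ Real.exp (s l)) (fun l _ ↦ (Real.exp_pos _).le)
    (Finset.mem_univ k)

variable {E G : Type*} [NormedAddCommGroup E] [NormedSpace ℝ E]
  [NormedAddCommGroup G] [NormedSpace ℝ G]

lemma norm_sum_softmax_smul_le [Nonempty ι] (s : ι → ℝ) {v : ι → E} {r : ℝ}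
    (hv : ∀ m, ‖v m‖ ≤ r) : ‖∑ m, softmax s m • v m‖ ≤ r :=
  mem_closedBall_zero_iff.mp <| (convex_closedBall 0 r).sum_mem (fun m _ ↦ softmax_nonneg s m)
    (sum_softmax s) fun m _ ↦ mem_closedBall_zero_iff.mpr (hv m)

lemma hasFDerivAt_softmax {s : G → ι → ℝ} {s' : ι → G →L[ℝ] ℝ} {x : G}
    (hs : ∀ l, HasFDerivAt (fun z ↦ s z l) (s' l) x) (m : ι) :
    HasFDerivAt (fun z ↦ softmax (s z) m)
      (softmax (s x) m • (s' m - ∑ l, softmax (s x) l • s' l)) x := by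
  have : Nonempty ι := ⟨m⟩
  have hsum : HasFDerivAt (fun z ↦ ∑ l, Real.exp (s z l)) (∑ l, Real.exp (s x l) • s' l) x :=
    HasFDerivAt.fun_sum fun l _ ↦ (hs l).exp
  have hinv := (hasFDerivAt_inv (sum_exp_pos (s x)).ne').comp x hsum
  refine (hinv.mul (hs m).exp).congr_fderiv ?_
  ext h
  simp only [softmax, add_apply, smul_apply, sub_apply, sum_apply, ContinuousLinearMap.comp_apply,
    ContinuousLinearMap.toSpanSingleton_apply, smul_eq_mul, Function.comp_apply, mul_assoc,
    ← Finset.mul_sum]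
  ring

lemma hasFDerivAt_sum_softmax_smul {s : G → ι → ℝ} {s' : ι → G →L[ℝ] ℝ} {v : G → ι → E}
    {v' : ι → G →L[ℝ] E} {x : G} (hs : ∀ l, HasFDerivAt (fun z ↦ s z l) (s' l) x)
    (hv : ∀ m, HasFDerivAt (fun z ↦ v z m) (v' m) x) :
    HasFDerivAt (fun z ↦ ∑ m, softmax (s z) m • v z m)
      (∑ m, softmax (s x) m • v' m + ∑ m, (softmax (s x) m • s' m).smulRight
        (v x m - ∑ l, softmax (s x) l • v x l)) x := by
  refine (HasFDerivAt.fun_sum fun m _ ↦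
    (hasFDerivAt_softmax hs m).fun_smul (hv m)).congr_fderiv ?_
  ext h
  have hmean : ∑ m, (softmax (s x) m * ∑ l, softmax (s x) l * s' l h) • v x m =
      ∑ m, (softmax (s x) m * s' m h) • ∑ l, softmax (s x) l • v x l := by
    rw [← Finset.sum_smul, Finset.smul_sum]
    exact Finset.sum_congr rfl fun m _ ↦ by rw [smul_smul, mul_comm]
  simp [Finset.sum_add_distrib, smul_sub, sub_smul, Finset.sum_sub_distrib, hmean]

end Softmax

section Normalize

variable {E : Type*} [NormedAddCommGroup E] [InnerProductSpace ℝ E]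

lemma hasFDerivAt_norm_of_ne_zero {x : E} (hx : x ≠ 0) :
    HasFDerivAt (fun z : E ↦ ‖z‖) (‖x‖⁻¹ • innerSL ℝ x) x := by
  have h := (hasStrictFDerivAt_norm_sq x).hasFDerivAt.sqrt (by simpa using hx)
  simp only [Real.sqrt_sq (norm_nonneg _)] at h
  refine h.congr_fderiv ?_
  ext v
  simp only [smul_apply, smul_eq_mul, nsmul_eq_mul, Nat.cast_ofNat]
  field_simp

lemma hasFDerivAt_normalize {x : E} (hx : x ≠ 0) :
    HasFDerivAt (NormedSpace.normalize : E → E) (‖x‖⁻¹ • (ℝ ∙ x)ᗮ.starProjection) x := by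
  have hinv := (hasFDerivAt_inv (norm_ne_zero_iff.mpr hx)).comp x (hasFDerivAt_norm_of_ne_zero hx)
  refine (hinv.smul (hasFDerivAt_id x)).congr_fderiv ?_
  ext h
  rw [Submodule.starProjection_orthogonal]
  simp [Submodule.starProjection_singleton, smul_smul, sub_eq_add_neg, div_eq_mul_inv]

lemma inner_fderiv_normalize_normalize {x : E} (hx : x ≠ 0) (w : E) :
    ⟪fderiv ℝ (NormedSpace.normalize : E → E) x w, NormedSpace.normalize x⟫ = 0 := by
  simp [(hasFDerivAt_normalize hx).fderiv, NormedSpace.normalize, inner_smul_left,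
    inner_smul_right]

variable [FiniteDimensional ℝ E] {κ : Type*} [Fintype κ]

lemma sum_norm_sq_starProjection (b : OrthonormalBasis κ ℝ E) (U : Submodule ℝ E) :
    ∑ u, ‖U.starProjection (b u)‖ ^ 2 = Module.finrank ℝ U := by
  have hproj : LinearMap.IsProj U (U.starProjection : E →ₗ[ℝ] E) :=
    ⟨U.starProjection_apply_mem, fun _ ↦ Submodule.starProjection_eq_self_iff.mpr⟩
  rw [← hproj.trace, LinearMap.trace_eq_sum_inner _ b]
  refine Finset.sum_congr rfl fun u _ ↦ ?_
  rw [real_inner_comm]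
  exact (U.re_inner_starProjection_eq_normSq (b u)).symm

lemma sum_norm_sq_fderiv_normalize (b : OrthonormalBasis κ ℝ E) {x : E} (hx : x ≠ 0) :
    ∑ u, ‖fderiv ℝ (NormedSpace.normalize : E → E) x (b u)‖ ^ 2 =
      (Module.finrank ℝ E - 1) * (‖x‖ ^ 2)⁻¹ := by
  have hrank : (1 + Module.finrank ℝ (ℝ ∙ x)ᗮ : ℝ) = Module.finrank ℝ E := by
    exact_mod_cast finrank_span_singleton (K := ℝ) hx ▸
      (ℝ ∙ x).finrank_add_finrank_orthogonal
  simp only [(hasFDerivAt_normalize hx).fderiv, smul_apply, norm_smul, mul_pow,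
    ← Finset.mul_sum, sum_norm_sq_starProjection, norm_inv, norm_norm, ← hrank]
  ring

end Normalize

section Attention

variable {ι E : Type*} [Fintype ι] [NormedAddCommGroup E] [InnerProductSpace ℝ E]

/-- The weight with which token `k` attends to token `m` at inverse temperature `β`. -/
noncomputable def attentionWeight (β : ℝ) (y : ι → E) (k m : ι) : ℝ :=
  softmax (fun l ↦ β * ⟪y k, y l⟫) m

/-- The softmax self-attention map `𝒜𝒯𝒯`, without residual connection. -/
noncomputable def attention (β : ℝ) (y : ι → E) (k : ι) : E :=
  ∑ m, attentionWeight β y k m • y m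

/-- The tokenwise normalization map `𝒩`. -/
noncomputable def normalizeTokens (x : ι → E) (i : ι) : E :=
  NormedSpace.normalize (x i)

lemma attention_comp_normalizeTokens (β : ℝ) :
    attention β ∘ normalizeTokens = fun (X : ι → E) k ↦
      (∑ l, Real.exp (β * ⟪‖X k‖⁻¹ • X k, ‖X l‖⁻¹ • X l⟫))⁻¹ •
        ∑ m, Real.exp (β * ⟪‖X k‖⁻¹ • X k, ‖X m‖⁻¹ • X m⟫) • (‖X m‖⁻¹ • X m) := by
  ext1 X
  ext1 k
  simp only [Function.comp_apply, attention, attentionWeight, softmax, normalizeTokens,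
    NormedSpace.normalize, Finset.smul_sum, mul_smul]

lemma hasFDerivAt_attention_apply (β : ℝ) (y : ι → E) (k : ι) :
    HasFDerivAt (fun z : ι → E ↦ attention β z k)
      (∑ m, attentionWeight β y k m • ContinuousLinearMap.proj (R := ℝ) (φ := fun _ ↦ E) m +
        ∑ m, (attentionWeight β y k m • β • (fderivInnerCLM ℝ (y k, y m) ∘L
          (ContinuousLinearMap.proj k).prod (ContinuousLinearMap.proj m))).smulRight
            (y m - attention β y k)) y :=
  hasFDerivAt_sum_softmax_smul
    (fun l ↦ ((hasFDerivAt_apply k y).inner ℝ (hasFDerivAt_apply l y)).const_mul β)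
    fun m ↦ hasFDerivAt_apply m y

lemma differentiable_attention (β : ℝ) : Differentiable ℝ (attention β : (ι → E) → ι → E) :=
  fun y ↦ differentiableAt_pi.mpr fun k ↦ (hasFDerivAt_attention_apply β y k).differentiableAt

lemma fderiv_attention_apply (β : ℝ) (y η : ι → E) (k : ι) :
    fderiv ℝ (attention β) y η k = ∑ m, attentionWeight β y k m • η m +
      ∑ m, (attentionWeight β y k m * (β * (⟪y k, η m⟫ + ⟪η k, y m⟫))) •
        (y m - attention β y k) := by
  have h := (hasFDerivAt_pi'.mp (differentiable_attention β y).hasFDerivAt k).unique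
    (hasFDerivAt_attention_apply β y k)
  simpa [fderivInnerCLM_apply] using congr($h η)

lemma attentionWeight_nonneg (β : ℝ) (y : ι → E) (k m : ι) : 0 ≤ attentionWeight β y k m :=
  softmax_nonneg _ m

variable {β ρ : ℝ} {y : ι → E}

lemma attentionWeight_le_exp (hβ : 0 ≤ β) {k m : ι} (hk : ‖y k‖ = 1) (hkm : ⟪y k, y m⟫ ≤ ρ) :
    attentionWeight β y k m ≤ Real.exp (-(β * (1 - ρ))) := by
  refine (softmax_le_exp_sub _ k m).trans (Real.exp_le_exp.mpr ?_)
  rw [real_inner_self_eq_norm_sq, hk]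
  nlinarith

lemma norm_sub_attention_le (hy : ∀ i, ‖y i‖ ≤ 1) (k m : ι) : ‖y m - attention β y k‖ ≤ 2 := by
  have : Nonempty ι := ⟨k⟩
  calc ‖y m - attention β y k‖ ≤ ‖y m‖ + ‖attention β y k‖ := norm_sub_le _ _
    _ ≤ 1 + 1 := add_le_add (hy m) (norm_sum_softmax_smul_le _ hy)
    _ = 2 := one_add_one_eq_two

lemma norm_attentionWeight_inner_smul_le (hβ : 0 ≤ β) (hy : ∀ i, ‖y i‖ ≤ 1) (e : E) (k m j : ι) :
    ‖(attentionWeight β y k m * (β * ⟪e, y j⟫)) • (y m - attention β y k)‖ ≤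
      attentionWeight β y k m * (2 * β * ‖e‖) := by
  have hinner : |⟪e, y j⟫| ≤ ‖e‖ :=
    (abs_real_inner_le_norm _ _).trans (mul_le_of_le_one_right (norm_nonneg _) (hy j))
  have hw := attentionWeight_nonneg β y k m
  rw [norm_smul, Real.norm_eq_abs, abs_mul, abs_mul, abs_of_nonneg hβ, abs_of_nonneg hw]
  calc attentionWeight β y k m * (β * |⟪e, y j⟫|) * ‖y m - attention β y k‖
      ≤ attentionWeight β y k m * (β * ‖e‖) * 2 := by
        gcongr
        exact norm_sub_attention_le hy k m
    _ = attentionWeight β y k m * (2 * β * ‖e‖) := by ring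

variable [DecidableEq ι]

lemma sum_erase_attentionWeight (β : ℝ) (y : ι → E) (k : ι) :
    ∑ m ∈ Finset.univ.erase k, attentionWeight β y k m = 1 - attentionWeight β y k k := by
  have : Nonempty ι := ⟨k⟩
  rw [Finset.sum_erase_eq_sub (Finset.mem_univ k)]
  exact congrArg (· - _) (sum_softmax _)

lemma norm_fderiv_attention_single_self_sub_le (hβ : 0 ≤ β) (hy : ∀ i, ‖y i‖ ≤ 1) {i : ι} {e : E}
    (he : ⟪e, y i⟫ = 0) :
    ‖fderiv ℝ (attention β) y (Pi.single i e) i - e‖ ≤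
      (1 - attentionWeight β y i i) * ((1 + 2 * β) * ‖e‖) := by
  have hinner (m : ι) : ⟪y i, (Pi.single i e : ι → E) m⟫ = 0 := by
    obtain rfl | hm := eq_or_ne m i
    · simpa [real_inner_comm] using he
    · simp [hm]
  have hderiv : fderiv ℝ (attention β) y (Pi.single i e) i - e =
      ∑ m ∈ Finset.univ.erase i,
        (attentionWeight β y i m * (β * ⟪e, y m⟫)) • (y m - attention β y i) -
      (1 - attentionWeight β y i i) • e := by
    rw [Finset.sum_erase _ (by simp [he]), fderiv_attention_apply]
    simp only [hinner, Pi.single_eq_same, zero_add]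
    simp only [Pi.single_apply, smul_ite, smul_zero, Finset.sum_ite_eq', Finset.mem_univ, if_true]
    module
  have hw : 0 ≤ 1 - attentionWeight β y i i :=
    sum_erase_attentionWeight β y i ▸ Finset.sum_nonneg fun m _ ↦ attentionWeight_nonneg β y i m
  calc ‖fderiv ℝ (attention β) y (Pi.single i e) i - e‖
      ≤ ∑ m ∈ Finset.univ.erase i, attentionWeight β y i m * (2 * β * ‖e‖) +
          (1 - attentionWeight β y i i) * ‖e‖ := by
        rw [hderiv]
        refine (norm_sub_le _ _).trans (add_le_add (norm_sum_le_of_le _ fun m _ ↦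
          norm_attentionWeight_inner_smul_le hβ hy e i m m) ?_)
        rw [norm_smul, Real.norm_of_nonneg hw]
    _ = (1 - attentionWeight β y i i) * ((1 + 2 * β) * ‖e‖) := by
        rw [← Finset.sum_mul, sum_erase_attentionWeight]
        ring

lemma norm_fderiv_attention_single_le_of_ne (hβ : 0 ≤ β) (hy : ∀ i, ‖y i‖ ≤ 1) {i k : ι}
    (hki : k ≠ i) (e : E) :
    ‖fderiv ℝ (attention β) y (Pi.single i e) k‖ ≤
      attentionWeight β y k i * ((1 + 2 * β) * ‖e‖) := by
  have hderiv : fderiv ℝ (attention β) y (Pi.single i e) k = attentionWeight β y k i • e +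
      (attentionWeight β y k i * (β * ⟪e, y k⟫)) • (y i - attention β y k) := by
    have hinner (m : ι) : ⟪y k, (Pi.single i e : ι → E) m⟫ = if m = i then ⟪e, y k⟫ else 0 := by
      obtain rfl | hm := eq_or_ne m i <;> simp_all [real_inner_comm]
    simp only [fderiv_attention_apply, hinner, Pi.single_eq_of_ne hki, inner_zero_left, add_zero]
    simp [Pi.single_apply]
  calc ‖fderiv ℝ (attention β) y (Pi.single i e) k‖
      ≤ attentionWeight β y k i * ‖e‖ + attentionWeight β y k i * (2 * β * ‖e‖) := by
        rw [hderiv]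
        refine (norm_add_le _ _).trans
          (add_le_add ?_ (norm_attentionWeight_inner_smul_le hβ hy e k i k))
        rw [norm_smul, Real.norm_of_nonneg (attentionWeight_nonneg β y k i)]
    _ = attentionWeight β y k i * ((1 + 2 * β) * ‖e‖) := by ring

end Attention

section Concentration

lemma abs_sum_norm_sq_sub_norm_sq_le {ι E : Type*} [Fintype ι] [DecidableEq ι]
    [SeminormedAddCommGroup E] {v : ι → E} {e : E} {i : ι} {r : ℝ} (hi : ‖v i - e‖ ≤ r)
    (herase : ∑ k ∈ Finset.univ.erase i, ‖v k‖ ≤ r) :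
    |∑ k, ‖v k‖ ^ 2 - ‖e‖ ^ 2| ≤ 2 * (r * ‖e‖ + r ^ 2) := by
  have hr : 0 ≤ r := (norm_nonneg _).trans hi
  have hsum_nonneg : 0 ≤ ∑ k ∈ Finset.univ.erase i, ‖v k‖ ^ 2 := by positivity
  have hsum_le : ∑ k ∈ Finset.univ.erase i, ‖v k‖ ^ 2 ≤ r ^ 2 :=
    (Finset.sum_sq_le_sq_sum_of_nonneg fun k _ ↦ norm_nonneg (v k)).trans <|
      pow_le_pow_left₀ (by positivity) herase 2
  obtain ⟨hlower, hupper⟩ := abs_le.mp ((abs_norm_sub_norm_le (v i) e).trans hi)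
  rw [← Finset.add_sum_erase _ _ (Finset.mem_univ i), abs_le]
  constructor <;> nlinarith [norm_nonneg (v i), norm_nonneg e]

/-- A bound for the total attention that leaks off the diagonal when `N` unit tokens have pairwise
cosine at most `ρ`, amplified by the factor `1 + 2 * β` that the Jacobian of the attention map
costs. -/
noncomputable def leakage (N β ρ : ℝ) : ℝ :=
  N * Real.exp (-(β * (1 - ρ))) * (1 + 2 * β)

lemma tendsto_leakage {ρ γ : ℝ} (hρ : ρ < 1) (hγ : 1 / (1 - ρ) < γ) :
    Tendsto (fun t ↦ leakage t (γ * Real.log t) ρ) atTop (𝓝 0) := by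
  set ε := γ * (1 - ρ) - 1 with hε
  have hε_pos : 0 < ε := sub_pos.mpr ((div_lt_iff₀ (sub_pos.mpr hρ)).mp hγ)
  have hexp : Tendsto (fun s : ℝ ↦ Real.exp (-ε * s) * (1 + 2 * (γ * s))) atTop (𝓝 0) := by
    have h := (tendsto_rpow_mul_exp_neg_mul_atTop_nhds_zero 0 ε hε_pos).add
      ((tendsto_rpow_mul_exp_neg_mul_atTop_nhds_zero 1 ε hε_pos).const_mul (2 * γ))
    simp only [mul_zero, add_zero, Real.rpow_zero, Real.rpow_one] at h
    exact h.congr fun s ↦ by ring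
  refine (hexp.comp Real.tendsto_log_atTop).congr' ?_
  filter_upwards [eventually_gt_atTop 0] with t ht
  have hpow : t * Real.exp (-(γ * Real.log t * (1 - ρ))) = Real.exp (-ε * Real.log t) := by
    rw [hε, show -(γ * (1 - ρ) - 1) * Real.log t = Real.log t + -(γ * Real.log t * (1 - ρ)) by ring,
      Real.exp_add, Real.exp_log ht]
  rw [leakage, hpow, Function.comp_apply]

variable {ι E : Type*} [Fintype ι] [DecidableEq ι] [NormedAddCommGroup E] [InnerProductSpace ℝ E]
  {β ρ : ℝ}

lemma abs_sum_norm_sq_fderiv_attention_single_sub_le {y : ι → E} (hβ : 0 ≤ β)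
    (hy : ∀ i, ‖y i‖ = 1) (hyρ : Pairwise fun i j ↦ ⟪y i, y j⟫ ≤ ρ) {i : ι} {e : E}
    (he : ⟪e, y i⟫ = 0) :
    |∑ k, ‖fderiv ℝ (attention β) y (Pi.single i e) k‖ ^ 2 - ‖e‖ ^ 2| ≤
      2 * (leakage (Fintype.card ι) β ρ + leakage (Fintype.card ι) β ρ ^ 2) * ‖e‖ ^ 2 := by
  have hsum {w : ι → ℝ} (hw : ∀ k, k ≠ i → w k ≤ Real.exp (-(β * (1 - ρ)))) :
      (∑ k ∈ Finset.univ.erase i, w k) * ((1 + 2 * β) * ‖e‖) ≤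
        leakage (Fintype.card ι) β ρ * ‖e‖ := by
    rw [leakage, mul_assoc _ (1 + 2 * β)]
    gcongr
    calc ∑ k ∈ Finset.univ.erase i, w k
        ≤ ∑ k ∈ Finset.univ.erase i, Real.exp (-(β * (1 - ρ))) :=
          Finset.sum_le_sum fun k hk ↦ hw k (Finset.ne_of_mem_erase hk)
      _ ≤ ∑ k : ι, Real.exp (-(β * (1 - ρ))) :=
          Finset.sum_le_sum_of_subset_of_nonneg (Finset.erase_subset i _) fun _ _ _ ↦ by positivity
      _ = Fintype.card ι * Real.exp (-(β * (1 - ρ))) := by simp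
  have hy' (k : ι) : ‖y k‖ ≤ 1 := (hy k).le
  have hself : ‖fderiv ℝ (attention β) y (Pi.single i e) i - e‖ ≤
      leakage (Fintype.card ι) β ρ * ‖e‖ := by
    refine (norm_fderiv_attention_single_self_sub_le hβ hy' he).trans ?_
    rw [← sum_erase_attentionWeight]
    exact hsum fun k hk ↦ attentionWeight_le_exp hβ (hy i) (hyρ hk.symm)
  have hoff : ∑ k ∈ Finset.univ.erase i, ‖fderiv ℝ (attention β) y (Pi.single i e) k‖ ≤
      leakage (Fintype.card ι) β ρ * ‖e‖ := by
    refine (Finset.sum_le_sum fun k hk ↦ norm_fderiv_attention_single_le_of_ne hβ hy'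
      (Finset.ne_of_mem_erase hk) e).trans ?_
    rw [← Finset.sum_mul]
    exact hsum fun k hk ↦ attentionWeight_le_exp hβ (hy k) (hyρ hk)
  exact (abs_sum_norm_sq_sub_norm_sq_le hself hoff).trans_eq (by ring)

end Concentration

section TokenwiseNormalization

variable {ι E : Type*} [NormedAddCommGroup E] [InnerProductSpace ℝ E]

lemma hasFDerivAt_normalizeTokens [Finite ι] {x : ι → E} (hx : ∀ i, x i ≠ 0) :
    HasFDerivAt normalizeTokens (ContinuousLinearMap.pi fun i ↦
      (fderiv ℝ (NormedSpace.normalize : E → E) (x i)) ∘L (ContinuousLinearMap.proj i)) x := by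
  have := Fintype.ofFinite ι
  exact hasFDerivAt_pi.mpr fun i ↦
    (hasFDerivAt_normalize (hx i)).differentiableAt.hasFDerivAt.comp x (hasFDerivAt_apply i x)

lemma fderiv_attention_comp_normalizeTokens_single [Fintype ι] [DecidableEq ι] (β : ℝ) {x : ι → E}
    (hx : ∀ i, x i ≠ 0) (i : ι) (w : E) :
    fderiv ℝ (attention β ∘ normalizeTokens) x (Pi.single i w) =
      fderiv ℝ (attention β) (normalizeTokens x)
        (Pi.single i (fderiv ℝ (NormedSpace.normalize : E → E) (x i) w)) := by
  have hnormalize := hasFDerivAt_normalizeTokens hx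
  rw [fderiv_comp x (differentiable_attention β _) hnormalize.differentiableAt, hnormalize.fderiv,
    ContinuousLinearMap.comp_apply]
  congr 1
  ext1 j
  obtain rfl | hj := eq_or_ne j i <;> simp_all

end TokenwiseNormalization

section Jacobian

variable {ι κ : Type*} [Fintype ι] [DecidableEq ι] [Fintype κ] [DecidableEq κ]

/-- The squared Frobenius norm `‖∇F‖_F²` of the Jacobian of a map between tuples of tokens, the
tokens being indexed by `ι` and their coordinates by `κ`. -/
noncomputable def jacobianFrobeniusSq
    (F : (ι → EuclideanSpace ℝ κ) → ι → EuclideanSpace ℝ κ) (x : ι → EuclideanSpace ℝ κ) : ℝ :=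
  ∑ i, ∑ u, ∑ j, ∑ v, (fderiv ℝ F x (Pi.single i (EuclideanSpace.single u 1)) j v) ^ 2

lemma jacobianFrobeniusSq_eq_sum_norm_sq
    (F : (ι → EuclideanSpace ℝ κ) → ι → EuclideanSpace ℝ κ) (x : ι → EuclideanSpace ℝ κ) :
    jacobianFrobeniusSq F x =
      ∑ i, ∑ u, ∑ j, ‖fderiv ℝ F x (Pi.single i (EuclideanSpace.single u 1)) j‖ ^ 2 := by
  simp only [jacobianFrobeniusSq, EuclideanSpace.real_norm_sq_eq]

lemma abs_jacobianFrobeniusSq_sub_le {β ρ : ℝ} (hβ : 0 ≤ β) {x : ι → EuclideanSpace ℝ κ}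
    (hx : ∀ i, x i ≠ 0)
    (hxρ : Pairwise fun i j ↦ ⟪NormedSpace.normalize (x i), NormedSpace.normalize (x j)⟫ ≤ ρ) :
    |jacobianFrobeniusSq (attention β ∘ normalizeTokens) x -
        ∑ i, (Fintype.card κ - 1) * (‖x i‖ ^ 2)⁻¹| ≤
      2 * (leakage (Fintype.card ι) β ρ + leakage (Fintype.card ι) β ρ ^ 2) *
        ∑ i, (Fintype.card κ - 1) * (‖x i‖ ^ 2)⁻¹ := by
  have hsum (i : ι) : (Fintype.card κ - 1) * (‖x i‖ ^ 2)⁻¹ =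
      ∑ u, ‖fderiv ℝ NormedSpace.normalize (x i) (EuclideanSpace.single u 1)‖ ^ 2 := by
    simpa using (sum_norm_sq_fderiv_normalize (EuclideanSpace.basisFun κ ℝ) (hx i)).symm
  simp only [jacobianFrobeniusSq_eq_sum_norm_sq, hsum, ← Finset.sum_sub_distrib, Finset.mul_sum,
    fderiv_attention_comp_normalizeTokens_single β hx]
  refine (Finset.abs_sum_le_sum_abs _ _).trans (Finset.sum_le_sum fun i _ ↦ ?_)
  refine (Finset.abs_sum_le_sum_abs _ _).trans (Finset.sum_le_sum fun u _ ↦ ?_)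
  exact abs_sum_norm_sq_fderiv_attention_single_sub_le hβ
    (fun j ↦ NormedSpace.norm_normalize (hx j)) hxρ (inner_fderiv_normalize_normalize (hx i) _)

lemma abs_jacobianFrobeniusSq_div_sub_le [Nonempty ι] {β ρ q : ℝ} (hβ : 0 ≤ β) (hq : 0 < q)
    {x : ι → EuclideanSpace ℝ κ} (hx : ∀ i, ‖x i‖ ^ 2 = q)
    (hxρ : Pairwise fun i j ↦ ⟪NormedSpace.normalize (x i), NormedSpace.normalize (x j)⟫ ≤ ρ) :
    |jacobianFrobeniusSq (attention β ∘ normalizeTokens) x / (Fintype.card ι * Fintype.card κ) -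
        1 / q * (1 - 1 / Fintype.card κ)| ≤
      2 * (leakage (Fintype.card ι) β ρ + leakage (Fintype.card ι) β ρ ^ 2) / q := by
  have hx0 (i : ι) : x i ≠ 0 := fun h ↦ hq.ne (by simpa [h] using hx i)
  obtain ⟨i⟩ := ‹Nonempty ι›
  have : Nonempty κ := not_isEmpty_iff.mp fun _ ↦ hx0 i (Subsingleton.elim _ _)
  have hN : (0 : ℝ) < Fintype.card ι := by exact_mod_cast Fintype.card_pos_iff.mpr ⟨i⟩
  have hd : (1 : ℝ) ≤ Fintype.card κ := by exact_mod_cast Fintype.card_pos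
  set ε := leakage (Fintype.card ι) β ρ with hε
  have hε_nonneg : 0 ≤ ε := by rw [hε, leakage]; positivity
  have h := abs_jacobianFrobeniusSq_sub_le hβ hx0 hxρ
  simp only [hx, Finset.sum_const, Finset.card_univ, nsmul_eq_mul, ← hε] at h
  set J := jacobianFrobeniusSq (attention β ∘ normalizeTokens) x
  set n := (Fintype.card ι : ℝ)
  set d := (Fintype.card κ : ℝ)
  have hmain : 1 / q * (1 - 1 / d) = n * ((d - 1) * q⁻¹) / (n * d) := by
    field_simp
  have hnd : 0 < n * d := by positivity
  rw [hmain, ← sub_div, abs_div, abs_of_pos hnd, div_le_iff₀ hnd]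
  refine h.trans ?_
  calc 2 * (ε + ε ^ 2) * (n * ((d - 1) * q⁻¹)) ≤ 2 * (ε + ε ^ 2) * (n * (d * q⁻¹)) := by
        gcongr
        linarith
    _ = 2 * (ε + ε ^ 2) / q * (n * d) := by ring

end Jacobian

theorem stmt17_general {ρ q γ : ℝ} (hρ : ρ < 1) (hq : 0 < q) (hγ : 1 / (1 - ρ) < γ) {N d : ℕ → ℕ}
    (hN : Tendsto N atTop atTop) (x : (n : ℕ) → Fin (N n) → EuclideanSpace ℝ (Fin (d n)))
    (hnorm : ∀ n i, ‖x n i‖ ^ 2 = q)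
    (hcos : ∀ n, Pairwise fun i j ↦
      ⟪NormedSpace.normalize (x n i), NormedSpace.normalize (x n j)⟫ ≤ ρ) :
    Tendsto (fun n ↦
      jacobianFrobeniusSq (attention (γ * Real.log (N n)) ∘ normalizeTokens) (x n) / (N n * d n) -
        1 / q * (1 - 1 / d n)) atTop (𝓝 0) := by
  have hγ_nonneg : 0 ≤ γ := ((one_div_pos.mpr (sub_pos.mpr hρ)).trans hγ).le
  have hleak : Tendsto (fun n ↦ leakage (N n) (γ * Real.log (N n)) ρ) atTop (𝓝 0) :=
    (tendsto_leakage hρ hγ).comp (tendsto_natCast_atTop_atTop.comp hN)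
  have hbound := ((hleak.add (hleak.pow 2)).const_mul 2).div_const q
  simp only [ne_eq, OfNat.ofNat_ne_zero, not_false_eq_true, zero_pow, add_zero, mul_zero,
    zero_div] at hbound
  refine squeeze_zero_norm' ?_ hbound
  filter_upwards [hN.eventually_gt_atTop 0] with n hn
  have : NeZero (N n) := ⟨hn.ne'⟩
  simpa using abs_jacobianFrobeniusSq_div_sub_le
    (mul_nonneg hγ_nonneg (Real.log_natCast_nonneg (N n))) hq (hnorm n) (hcos n)

theorem stmt17 (ρ q γ : ℝ) (hρ : ρ ∈ Set.Ioo (0:ℝ) 1) (hq : 0 < q)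
    (hγ : 1 / (1 - ρ) < γ)
    (d : ℕ → ℕ) (hd : ∀ n, n + 2 ≤ d n)
    (x : (n : ℕ) → Fin (n + 2) → EuclideanSpace ℝ (Fin (d n)))
    (hnorm : ∀ n i, ‖x n i‖ ^ 2 = q)
    (hcos : ∀ n, ∀ i j : Fin (n + 2), i ≠ j →
      ⟪(‖x n i‖⁻¹ • x n i : EuclideanSpace ℝ (Fin (d n))), ‖x n j‖⁻¹ • x n j⟫ = ρ) :
    Filter.Tendsto (fun n : ℕ =>
      let β : ℝ := γ * Real.log (n + 2)
      let F : (Fin (n + 2) → EuclideanSpace ℝ (Fin (d n))) →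
          (Fin (n + 2) → EuclideanSpace ℝ (Fin (d n))) := fun X k =>
        (∑ l, Real.exp (β * ⟪(‖X k‖⁻¹ • X k : EuclideanSpace ℝ (Fin (d n))),
            ‖X l‖⁻¹ • X l⟫))⁻¹ •
          ∑ m, Real.exp (β * ⟪(‖X k‖⁻¹ • X k : EuclideanSpace ℝ (Fin (d n))),
            ‖X m‖⁻¹ • X m⟫) • (‖X m‖⁻¹ • X m)
      (∑ i : Fin (n + 2), ∑ u : Fin (d n), ∑ j : Fin (n + 2), ∑ v : Fin (d n),
        (fderiv ℝ F (x n) (Pi.single i (EuclideanSpace.single u 1)) j v) ^ 2) /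
          (((n : ℝ) + 2) * (d n)) -
        (1 / q) * (1 - 1 / (d n : ℝ)))
      Filter.atTop (nhds 0) := by
  simpa only [jacobianFrobeniusSq, attention_comp_normalizeTokens, Nat.cast_add,
    Nat.cast_ofNat] using stmt17_general hρ.2 hq hγ (N := (· + 2)) (tendsto_add_atTop_nat 2) x hnorm
      fun n i j hij ↦ (hcos n i j hij).le
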